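/- Let α > -1, 0 < t ≤ 2, b ≠ 0, and n ≥ 2. Define S_n(x) = L_n^α(x) + b·L_{n-1}^{α+t}(x). If x and x' are consecutive zeros of L_n^α, then S_n(x)·S_n(x') < 0; hence the zeros of S_n interlace with the zeros of L_n^α. -/

import Mathlib

open Finset

/-- Generalized Laguerre polynomial `L_n^α(x) = ∑_{k=0}^n (-1)^k C(n+α, n-k) x^k / k!`,
where `C(n+α, n-k) = (∏_{i=1}^{n-k} (α+k+i)) / (n-k)!`. -/
noncomputable def laguerre (α : ℝ) (n : ℕ) (x : ℝ) : ℝ :=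
  ∑ k ∈ Finset.range (n + 1),
    (-1 : ℝ) ^ k * (∏ i ∈ Finset.range (n - k), (α + k + 1 + i)) /
      ((Nat.factorial (n - k) : ℝ) * (Nat.factorial k : ℝ)) * x ^ k

/-!
At a zero `x` of `p = L_n^α` the derivative is `p' = -L_{n-1}^{α+1}`, so the point is that
`q = L_{n-1}^{α+t}` has the sign of `L_{n-1}^{α+1}` there. As functions of the parameter, Laguerre
polynomials at fixed `x > 0` are Charlier polynomials `f`, for which `f' z * f (z + 1) > 0` at every
zero `z`; this spaces the zeros of `f` more than one unit apart, so `f` has no zero in a unit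
interval at whose ends it has the same sign. For `β ↦ L_{n-1}^β` the unit intervals `[α, α + 1]` and
`[α + 1, α + 2]` are of this kind at a zero of `L_n^α`, by the contiguous relations.

Hence all residues of `q / p` are negative, `q / p` is strictly increasing between consecutive zeros
of `p`, and `p + b q` vanishes where `q / p = -1 / b`.
-/

section

open Polynomial Set Topology

section SignChanges

variable {f : ℝ → ℝ} {a b fa fb : ℝ}

theorem exists_mem_Ioo_eq_zero_of_mul_neg (hab : a ≤ b) (hf : ContinuousOn f (Icc a b))
    (h : f a * f b < 0) : ∃ z ∈ Ioo a b, f z = 0 := by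
  rcases mul_neg_iff.1 h with ⟨ha, hb⟩ | ⟨ha, hb⟩
  · exact intermediate_value_Ioo' hab hf ⟨hb, ha⟩
  · exact intermediate_value_Ioo hab hf ⟨ha, hb⟩

theorem mul_pos_of_isPreconnected_of_forall_ne_zero {X : Type*} [TopologicalSpace X]
    {s : Set X} {g : X → ℝ} (hs : IsPreconnected s) (hg : ContinuousOn g s) (hne : ∀ z ∈ s, g z ≠ 0)
    {u v : X} (hu : u ∈ s) (hv : v ∈ s) : 0 < g u * g v := by
  by_contra! hle
  obtain ⟨z, hz, hz0⟩ : 0 ∈ g '' s := by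
    rcases mul_nonpos_iff.1 hle with ⟨hu0, hv0⟩ | ⟨hu0, hv0⟩
    · exact hs.intermediate_value hv hu hg ⟨hv0, hu0⟩
    · exact hs.intermediate_value hu hv hg ⟨hu0, hv0⟩
  exact hne z hz hz0

theorem exists_mem_Ioo_deriv_mul_pos (hab : a < b) (hf : HasDerivAt f fa a) (ha : f a = 0)
    (hfa : fa ≠ 0) : ∃ c ∈ Ioo a b, 0 < fa * f c := by
  have hslope : Filter.Tendsto (fun y => fa * slope f a y) (𝓝[>] a) (𝓝 (fa * fa)) :=
    ((hasDerivAt_iff_tendsto_slope.1 hf).mono_left (nhdsGT_le_nhdsNE a)).const_mul fa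
  obtain ⟨c, hc, hac, hcb⟩ :=
    ((hslope.eventually_const_lt (mul_self_pos.2 hfa)).and (Ioo_mem_nhdsGT hab)).exists
  refine ⟨c, ⟨hac, hcb⟩, ?_⟩
  rw [slope_def_field, ha, sub_zero, ← mul_div_assoc] at hc
  exact (div_pos_iff_of_pos_right (sub_pos.2 hac)).1 hc

theorem exists_zero_of_deriv_left_mul_neg (hab : a < b) (hcont : ContinuousOn f (Icc a b))
    (hf : HasDerivAt f fa a) (ha : f a = 0) (h : fa * f b < 0) : ∃ z ∈ Ioo a b, f z = 0 := by
  obtain ⟨c, ⟨hac, hcb⟩, hc⟩ := exists_mem_Ioo_deriv_mul_pos hab hf ha (left_ne_zero_of_mul h.ne)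
  have hcb0 : f c * f b < 0 := by
    refine neg_of_mul_neg_right (a := fa * fa) ?_ (mul_self_nonneg fa)
    linarith [mul_neg_of_pos_of_neg hc h]
  obtain ⟨z, hz, hz0⟩ :=
    exists_mem_Ioo_eq_zero_of_mul_neg hcb.le (hcont.mono (Icc_subset_Icc_left hac.le)) hcb0
  exact ⟨z, ⟨hac.trans hz.1, hz.2⟩, hz0⟩

theorem exists_zero_of_deriv_right_mul_pos (hab : a < b) (hcont : ContinuousOn f (Icc a b))
    (hf : HasDerivAt f fb b) (hb : f b = 0) (h : 0 < fb * f a) : ∃ z ∈ Ioo a b, f z = 0 := by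
  have hmaps : MapsTo (fun y : ℝ => -y) (Icc (-b) (-a)) (Icc a b) := fun y hy =>
    ⟨le_neg_of_le_neg hy.2, neg_le.1 hy.1⟩
  have hderiv : HasDerivAt (fun y => f (-y)) (-fb) (-b) := by
    simpa [Function.comp_def] using
      HasDerivAt.comp (-b) (by simpa using hf) (hasDerivAt_neg (-b))
  obtain ⟨z, hz, hz0⟩ := exists_zero_of_deriv_left_mul_neg (f := fun y => f (-y))
    (neg_lt_neg hab) (hcont.comp continuousOn_neg hmaps) hderiv
    (by simpa using hb) (by simpa using h)
  exact ⟨-z, ⟨lt_neg_of_lt_neg hz.2, neg_lt.1 hz.1⟩, hz0⟩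

theorem deriv_mul_deriv_nonpos_of_forall_ne_zero (hab : a < b) (hcont : ContinuousOn f (Icc a b))
    (hfa : HasDerivAt f fa a) (hfb : HasDerivAt f fb b) (ha : f a = 0) (hb : f b = 0)
    (hne : ∀ z ∈ Ioo a b, f z ≠ 0) : fa * fb ≤ 0 := by
  by_contra! h
  obtain ⟨c, ⟨hac, hcb⟩, hc⟩ := exists_mem_Ioo_deriv_mul_pos hab hfa ha (left_ne_zero_of_mul h.ne')
  have hbc : 0 < fb * f c := by
    refine pos_of_mul_pos_right (a := fa * fa) ?_ (mul_self_nonneg fa)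
    linarith [mul_pos h hc]
  obtain ⟨z, hz, hz0⟩ := exists_zero_of_deriv_right_mul_pos hcb
    (hcont.mono (Icc_subset_Icc_left hac.le)) hfb hb hbc
  exact hne z ⟨hac.trans hz.1, hz.2⟩ hz0

end SignChanges

section UnitSpacing

variable {f : ℝ[X]}

/- At the largest root `a` violating the bound, the next root `b` satisfies `f' a * f' b < 0`, so
`f' b * f (a + 1) < 0` and there is a further root in `(b, a + 1)`: `b` is a larger violation. -/
theorem add_one_lt_of_isRoot_of_lt
    (h : ∀ z, f.IsRoot z → 0 < f.derivative.eval z * f.eval (z + 1)) {y₁ y₂ : ℝ}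
    (h₁ : f.IsRoot y₁) (h₂ : f.IsRoot y₂) (hlt : y₁ < y₂) : y₁ + 1 < y₂ := by
  by_contra! hle
  have hf : f ≠ 0 := by
    rintro rfl
    simpa using h 0
  set close : Set ℝ := {z | f.IsRoot z ∧ ∃ w ∈ Ioc z (z + 1), f.IsRoot w}
  have hfin : close.Finite := (finite_setOfPred_isRoot hf).subset fun z hz => hz.1
  obtain ⟨a, ⟨ha, b, ⟨hab, hba⟩, hb⟩, hmax⟩ :=
    hfin.exists_maximal ⟨y₁, h₁, y₂, ⟨hlt, hle⟩, h₂⟩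
  have hlast : ∀ z w, a < z → z < w → w ≤ a + 1 → f.IsRoot z → ¬ f.IsRoot w :=
    fun z w haz hzw hwa hz hw =>
      haz.not_ge (hmax ⟨hz, w, ⟨hzw, hwa.trans (by linarith)⟩, hw⟩ haz.le)
  have hnonpos : f.derivative.eval a * f.derivative.eval b ≤ 0 :=
    deriv_mul_deriv_nonpos_of_forall_ne_zero hab f.continuousOn (f.hasDerivAt a) (f.hasDerivAt b)
      ha hb fun z hz hz0 => hlast z b hz.1 hz.2 hba hz0 hb
  have hneg : f.derivative.eval b * f.eval (a + 1) < 0 := by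
    have hdb : f.derivative.eval b ≠ 0 := left_ne_zero_of_mul (h b hb).ne'
    have hpos := h a ha
    have hdab := hnonpos.lt_of_ne (mul_ne_zero (left_ne_zero_of_mul hpos.ne') hdb)
    refine neg_of_mul_neg_right (a := f.derivative.eval a * f.derivative.eval a) ?_
      (mul_self_nonneg _)
    linarith [mul_neg_of_neg_of_pos hdab hpos]
  have hba' : b < a + 1 := hba.lt_of_ne fun hba =>
    right_ne_zero_of_mul hneg.ne (hba ▸ hb)
  obtain ⟨z, hz, hz0⟩ :=
    exists_zero_of_deriv_left_mul_neg hba' f.continuousOn (f.hasDerivAt b) hb hneg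
  exact hlast b z hab hz.1 hz.2.le hb hz0

theorem eval_ne_zero_of_mul_eval_add_one_pos
    (h : ∀ z, f.IsRoot z → 0 < f.derivative.eval z * f.eval (z + 1)) {a : ℝ}
    (ha : 0 < f.eval a * f.eval (a + 1)) {s : ℝ} (hs : s ∈ Icc a (a + 1)) : f.eval s ≠ 0 := by
  intro hs0
  have has : a < s := hs.1.lt_of_ne fun has => left_ne_zero_of_mul ha.ne' (has ▸ hs0)
  have hsa : s < a + 1 := hs.2.lt_of_ne fun hsa => right_ne_zero_of_mul ha.ne' (hsa ▸ hs0)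
  have hd : f.derivative.eval s ≠ 0 := left_ne_zero_of_mul (h s hs0).ne'
  rcases (mul_ne_zero hd (right_ne_zero_of_mul ha.ne')).lt_or_gt with hneg | hpos
  · obtain ⟨z, hz, hz0⟩ :=
      exists_zero_of_deriv_left_mul_neg hsa f.continuousOn (f.hasDerivAt s) hs0 hneg
    linarith [add_one_lt_of_isRoot_of_lt h hs0 hz0 hz.1, hz.2]
  · have hpos' : 0 < f.derivative.eval s * f.eval a := by
      refine pos_of_mul_pos_left ?_ (mul_self_nonneg (f.eval (a + 1)))
      linarith [mul_pos hpos ha]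
    obtain ⟨z, hz, hz0⟩ :=
      exists_zero_of_deriv_right_mul_pos has f.continuousOn (f.hasDerivAt s) hs0 hpos'
    linarith [add_one_lt_of_isRoot_of_lt h hz0 hs0 hz.2, hz.1]

theorem eval_mul_eval_pos_of_mem_Icc
    (h : ∀ z, f.IsRoot z → 0 < f.derivative.eval z * f.eval (z + 1)) {a : ℝ}
    (ha : 0 < f.eval a * f.eval (a + 1)) {s t : ℝ} (hs : s ∈ Icc a (a + 1))
    (ht : t ∈ Icc a (a + 1)) : 0 < f.eval s * f.eval t :=
  mul_pos_of_isPreconnected_of_forall_ne_zero isPreconnected_Icc f.continuousOn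
    (fun _ hz => eval_ne_zero_of_mul_eval_add_one_pos h ha hz) hs ht

end UnitSpacing

section PartialFractions

theorem eval_div_eval_eq_sum_roots {K : Type*} [Field K] [DecidableEq K] {p q : K[X]}
    (hp : p.Splits) (hnodup : p.roots.Nodup) (hdeg : q.degree < p.degree) {y : K}
    (hy : p.eval y ≠ 0) :
    q.eval y / p.eval y =
      ∑ z ∈ p.roots.toFinset, q.eval z / p.derivative.eval z / (y - z) := by
  have hp0 : p ≠ 0 := by
    rintro rfl
    simp at hy
  set s := p.roots.toFinset with hs
  set N := Lagrange.nodal s (id : K → K)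
  have hpN : p = C p.leadingCoeff * N := by
    conv_lhs => rw [hp.eq_prod_roots, ← hnodup.dedup, ← Multiset.toFinset_val]
    rfl
  have hcard : p.degree = s.card := by
    rw [hp.degree_eq_card_roots hp0, hs, Multiset.toFinset_card_of_nodup hnodup]
  have hys : ∀ z ∈ s, y ≠ id z := fun z hz hyz =>
    hy (hyz ▸ isRoot_of_mem_roots (Multiset.mem_toFinset.1 hz))
  have hNy : N.eval y ≠ 0 := Lagrange.eval_nodal_not_at_node hys
  have hq : q.eval y = N.eval y * ∑ z ∈ s, Lagrange.nodalWeight s id z * (y - z)⁻¹ * q.eval z := by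
    conv_lhs => rw [Lagrange.eq_interpolate (f := q) (v := id) (injOn_id _) (hcard ▸ hdeg)]
    exact Lagrange.eval_interpolate_not_at_node _ hys
  have hpy : p.eval y = p.leadingCoeff * N.eval y := by
    conv_lhs => rw [hpN, eval_C_mul]
  rw [hq, hpy, mul_comm, mul_div_mul_right _ _ hNy, Finset.sum_div]
  refine Finset.sum_congr rfl fun z hz => ?_
  have hpz : p.derivative.eval z = p.leadingCoeff * N.derivative.eval z := by
    conv_lhs => rw [hpN, derivative_C_mul, eval_C_mul]
  rw [Lagrange.nodalWeight_eq_eval_derivative_nodal hz, hpz, id]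
  simp only [div_eq_mul_inv, mul_inv]
  ring

variable {K : Type*} [Field K] [LinearOrder K] [IsStrictOrderedRing K]

theorem strictMonoOn_div_sub {c z : K} (hc : c < 0) {I : Set K} (hI : I.OrdConnected)
    (hz : z ∉ I) : StrictMonoOn (fun y => c / (y - z)) I := by
  intro u hu v hv huv
  have hinv : (v - z)⁻¹ < (u - z)⁻¹ := by
    rcases lt_or_ge z u with hzu | huz
    · exact inv_strictAnti₀ (sub_pos.2 hzu) (sub_lt_sub_right huv z)
    · have hvz : v < z := lt_of_not_ge fun hzv => hz (hI.out hu hv ⟨huz, hzv⟩)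
      exact (inv_lt_inv_of_neg (sub_neg.2 hvz) (sub_neg.2 (huv.trans hvz))).2
        (sub_lt_sub_right huv z)
  simpa only [div_eq_mul_inv] using mul_lt_mul_of_neg_left hinv hc

theorem strictMonoOn_sum_div_sub {s : Finset K} (hs : s.Nonempty) {c : K → K}
    (hc : ∀ z ∈ s, c z < 0) {I : Set K} (hI : I.OrdConnected) (hz : ∀ z ∈ s, z ∉ I) :
    StrictMonoOn (fun y => ∑ z ∈ s, c z / (y - z)) I := fun _ hu _ hv huv =>
  Finset.sum_lt_sum_of_nonempty hs fun z hzs =>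
    strictMonoOn_div_sub (hc z hzs) hI (hz z hzs) hu hv huv

theorem strictMonoOn_eval_div_eval {p q : K[X]} (hp : p.Splits) (hdeg : q.degree < p.degree)
    (hsign : ∀ z, p.IsRoot z → p.derivative.eval z * q.eval z < 0) (hroot : p.degree ≠ 0)
    {I : Set K} (hI : I.OrdConnected) (hne : ∀ z ∈ I, p.eval z ≠ 0) :
    StrictMonoOn (fun y => q.eval y / p.eval y) I := by
  have hp0 : p ≠ 0 := ne_zero_of_degree_gt hdeg
  have hnodup : p.roots.Nodup := Multiset.nodup_iff_count_le_one.2 fun z => by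
    rw [count_roots]
    by_contra! hz
    obtain ⟨hz0, hz1⟩ := (one_lt_rootMultiplicity_iff_isRoot hp0).1 hz
    exact left_ne_zero_of_mul (hsign z hz0).ne hz1
  have hs : p.roots.toFinset.Nonempty := by
    obtain ⟨z, hz⟩ := hp.exists_eval_eq_zero hroot
    exact ⟨z, by simpa [hp0] using hz⟩
  refine (strictMonoOn_sum_div_sub hs (c := fun z => q.eval z / p.derivative.eval z)
    (fun z hz => ?_) hI fun z hz hzI => ?_).congr fun y hy =>
      (eval_div_eval_eq_sum_roots hp hnodup hdeg (hne y hy)).symm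
  · have hz0 : p.IsRoot z := isRoot_of_mem_roots (Multiset.mem_toFinset.1 hz)
    exact div_neg_iff.2 ((mul_neg_iff.1 (hsign z hz0)).symm.imp (fun h => h.symm) fun h => h.symm)
  · exact hne z hzI (isRoot_of_mem_roots (Multiset.mem_toFinset.1 hz))

end PartialFractions

section Interlacing

variable {p q : ℝ[X]} {x x' : ℝ}

theorem eval_mul_eval_neg_of_consecutive_roots
    (hsign : ∀ z, p.IsRoot z → p.derivative.eval z * q.eval z < 0) (hlt : x < x')
    (hx : p.IsRoot x) (hx' : p.IsRoot x') (hcons : ∀ u ∈ Ioo x x', p.eval u ≠ 0) :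
    q.eval x * q.eval x' < 0 := by
  have hderiv : p.derivative.eval x * p.derivative.eval x' ≤ 0 :=
    deriv_mul_deriv_nonpos_of_forall_ne_zero hlt p.continuousOn (p.hasDerivAt x) (p.hasDerivAt x')
      hx hx' hcons
  refine neg_of_mul_pos_left ?_ hderiv
  linarith [mul_pos_of_neg_of_neg (hsign x hx) (hsign x' hx')]

theorem eval_add_mul_neg_and_existsUnique_root (hp : p.Splits) (hdeg : q.degree < p.degree)
    (hsign : ∀ z, p.IsRoot z → p.derivative.eval z * q.eval z < 0) {b : ℝ} (hb : b ≠ 0)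
    (hlt : x < x') (hx : p.IsRoot x) (hx' : p.IsRoot x')
    (hcons : ∀ u ∈ Ioo x x', p.eval u ≠ 0) :
    (p + C b * q).eval x * (p + C b * q).eval x' < 0 ∧
      ∃! z, z ∈ Ioo x x' ∧ (p + C b * q).eval z = 0 := by
  have hneg : (p + C b * q).eval x * (p + C b * q).eval x' < 0 := by
    have hq := eval_mul_eval_neg_of_consecutive_roots hsign hlt hx hx' hcons
    rw [IsRoot.def] at hx hx'
    simp only [eval_add, eval_C_mul, hx, hx', zero_add]
    linarith [mul_neg_of_pos_of_neg (mul_self_pos.2 hb) hq]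
  have hratio : ∀ u ∈ Ioo x x', (p + C b * q).eval u = 0 → q.eval u / p.eval u = -b⁻¹ := by
    intro u hu hu0
    rw [eval_add, eval_C_mul] at hu0
    have hpu := hcons u hu
    field_simp
    linear_combination hu0
  have hmono := strictMonoOn_eval_div_eval hp hdeg hsign
    (degree_pos_of_root (ne_zero_of_degree_gt hdeg) hx).ne' ordConnected_Ioo hcons
  obtain ⟨z, hz, hz0⟩ :=
    exists_mem_Ioo_eq_zero_of_mul_neg hlt.le (p + C b * q).continuousOn hneg
  exact ⟨hneg, z, ⟨hz, hz0⟩, fun w ⟨hw, hw0⟩ =>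
    hmono.injOn hw hz ((hratio w hw hw0).trans (hratio z hz hz0).symm)⟩

end Interlacing

section FavardSequence

/-- A sequence of real polynomials generated by a three-term recurrence
`P (n + 2) = (a X + b) P (n + 1) - c P n` with `a, c > 0` at each step. By Favard's theorem these
are the orthogonal polynomials of positive measures, up to positive scaling; only the recurrence is
recorded, because the Sturm-type facts below follow from it directly. -/
structure IsFavardSequence (P : ℕ → ℝ[X]) : Prop where
  zero : P 0 = 1
  one : ∃ a b : ℝ, 0 < a ∧ P 1 = C a * X + C b
  add_two : ∀ n, ∃ a b c : ℝ, 0 < a ∧ 0 < c ∧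
    P (n + 2) = (C a * X + C b) * P (n + 1) - C c * P n

namespace IsFavardSequence

variable {P : ℕ → ℝ[X]} (hP : IsFavardSequence P)
include hP

theorem eval_wronskian_pos (n : ℕ) (y : ℝ) : 0 < (wronskian (P n) (P (n + 1))).eval y := by
  induction n with
  | zero =>
    obtain ⟨a, b, ha, h1⟩ := hP.one
    simpa [wronskian, hP.zero, h1] using ha
  | succ n ih =>
    obtain ⟨a, b, c, ha, hc, h⟩ := hP.add_two n
    have hrec : wronskian (P (n + 1)) (P (n + 2)) =
        C a * P (n + 1) ^ 2 + C c * wronskian (P n) (P (n + 1)) := by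
      rw [h]
      simp only [wronskian, derivative_sub, derivative_add, derivative_mul, derivative_C,
        derivative_X]
      ring
    rw [hrec, eval_add, eval_C_mul, eval_C_mul, eval_pow]
    positivity

theorem derivative_eval_mul_eval_pos {n : ℕ} {z : ℝ} (hz : (P (n + 1)).IsRoot z) :
    0 < (P (n + 1)).derivative.eval z * (P n).eval z := by
  have hW := hP.eval_wronskian_pos n z
  rwa [wronskian, eval_sub, eval_mul, eval_mul, hz.eq_zero, mul_zero, sub_zero, mul_comm] at hW

theorem im_aeval_mul_conj_pos (n : ℕ) {z : ℂ} (hz : 0 < z.im) :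
    0 < (aeval z (P (n + 1)) * starRingEnd ℂ (aeval z (P n))).im := by
  induction n with
  | zero =>
    obtain ⟨a, b, ha, h1⟩ := hP.one
    simpa [hP.zero, h1] using mul_pos ha hz
  | succ n ih =>
    obtain ⟨a, b, c, ha, hc, h⟩ := hP.add_two n
    rw [h, map_sub, map_mul, map_mul, map_add, map_mul, aeval_C, aeval_C, aeval_C, aeval_X]
    set u := aeval z (P n)
    set v := aeval z (P (n + 1))
    have hv : v ≠ 0 := fun hv => by simp [hv] at ih
    have hrec : (((a : ℂ) * z + b) * v - c * u) * starRingEnd ℂ v =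
        (a * z + b) * Complex.normSq v - c * starRingEnd ℂ (v * starRingEnd ℂ u) := by
      rw [Complex.normSq_eq_conj_mul_self, map_mul, Complex.conj_conj]
      ring
    have him : ((a * z + b) * Complex.normSq v - c * starRingEnd ℂ (v * starRingEnd ℂ u)).im =
        a * z.im * Complex.normSq v + c * (v * starRingEnd ℂ u).im := by
      rw [Complex.sub_im, Complex.im_mul_ofReal, Complex.im_ofReal_mul, Complex.conj_im,
        Complex.add_im, Complex.im_ofReal_mul, Complex.ofReal_im]
      ring
    simp only [Complex.coe_algebraMap]
    rw [hrec, him]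
    have := Complex.normSq_pos.2 hv
    positivity

theorem splits (n : ℕ) : (P n).Splits := by
  obtain _ | n := n
  · rw [hP.zero]
    exact Splits.one
  have hne : ∀ z : ℂ, 0 < z.im → aeval z (P (n + 1)) ≠ 0 := fun z hz h => by
    simpa [h] using hP.im_aeval_mul_conj_pos n hz
  refine Splits.of_splits_map (algebraMap ℝ ℂ) (IsAlgClosed.splits _) fun z hz => ?_
  have hz0 : aeval z (P (n + 1)) = 0 := by
    rw [aeval_def, ← eval_map]
    exact isRoot_of_mem_roots hz
  suffices hreal : z.im = 0 from ⟨z.re, Complex.ext rfl hreal.symm⟩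
  rcases lt_trichotomy z.im 0 with him | him | him
  · refine absurd ?_ (hne (starRingEnd ℂ z) (by simpa using him))
    rw [aeval_conj, hz0, map_zero]
  · exact him
  · exact absurd hz0 (hne z him)

end IsFavardSequence

end FavardSequence

section Laguerre

variable (α x : ℝ) (n : ℕ)

/-- The coefficient of `x ^ k` in `L_{k+j}^α`. Indexing by `(k, j)` with `k + j` the degree turns
the sum defining `L_n^α` into a sum over `antidiagonal n`. -/
noncomputable def laguerreCoeff (k j : ℕ) : ℝ :=
  (-1) ^ k * (∏ i ∈ Finset.range j, (α + k + 1 + i)) / (j.factorial * k.factorial)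

theorem laguerre_eq_sum_antidiagonal :
    laguerre α n x = ∑ p ∈ antidiagonal n, laguerreCoeff α p.1 p.2 * x ^ p.1 := by
  rw [Finset.Nat.sum_antidiagonal_eq_sum_range_succ fun k j => laguerreCoeff α k j * x ^ k]
  rfl

theorem laguerreCoeff_add_one_zero (k : ℕ) : laguerreCoeff (α + 1) k 0 = laguerreCoeff α k 0 := by
  simp only [laguerreCoeff, Finset.range_zero, Finset.prod_empty]

theorem laguerreCoeff_add_one_succ (k j : ℕ) :
    laguerreCoeff (α + 1) k (j + 1) = laguerreCoeff α k (j + 1) + laguerreCoeff (α + 1) k j := by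
  have hprod : ∏ i ∈ Finset.range j, (α + k + 1 + (i + 1 : ℕ)) =
      ∏ i ∈ Finset.range j, (α + 1 + k + 1 + i) :=
    Finset.prod_congr rfl fun i _ => by push_cast; ring
  simp only [laguerreCoeff]
  rw [Finset.prod_range_succ, Finset.prod_range_succ', hprod, Nat.factorial_succ]
  push_cast
  field_simp
  ring

theorem laguerreCoeff_succ_right (k j : ℕ) :
    (j + 1) * laguerreCoeff α k (j + 1) = (k + j + 1 + α) * laguerreCoeff α k j := by
  simp only [laguerreCoeff]
  rw [Finset.prod_range_succ, Nat.factorial_succ]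
  push_cast
  field_simp
  ring

theorem laguerreCoeff_succ_left (k j : ℕ) :
    (k + 1) * laguerreCoeff α (k + 1) j = -laguerreCoeff (α + 1) k j := by
  have hprod : ∏ i ∈ Finset.range j, (α + (k + 1 : ℕ) + 1 + i) =
      ∏ i ∈ Finset.range j, (α + 1 + k + 1 + i) :=
    Finset.prod_congr rfl fun i _ => by push_cast; ring
  simp only [laguerreCoeff]
  rw [hprod, Nat.factorial_succ]
  push_cast
  field_simp
  ring

theorem laguerre_zero : laguerre α 0 x = 1 := by
  simp [laguerre]

theorem laguerre_add_one_succ :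
    laguerre (α + 1) (n + 1) x = laguerre α (n + 1) x + laguerre (α + 1) n x := by
  simp only [laguerre_eq_sum_antidiagonal, Finset.Nat.sum_antidiagonal_succ',
    laguerreCoeff_add_one_zero, laguerreCoeff_add_one_succ, add_mul, Finset.sum_add_distrib]
  ring

theorem succ_mul_laguerre_succ :
    (n + 1) * laguerre α (n + 1) x = (n + 1 + α) * laguerre α n x - x * laguerre (α + 1) n x := by
  have hsplit : (n + 1) * laguerre α (n + 1) x =
      ∑ p ∈ antidiagonal (n + 1), (p.2 : ℝ) * laguerreCoeff α p.1 p.2 * x ^ p.1 +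
      ∑ p ∈ antidiagonal (n + 1), (p.1 : ℝ) * laguerreCoeff α p.1 p.2 * x ^ p.1 := by
    rw [laguerre_eq_sum_antidiagonal, Finset.mul_sum, ← Finset.sum_add_distrib]
    refine Finset.sum_congr rfl fun p hp => ?_
    have hp' : (p.1 : ℝ) + p.2 = n + 1 := by exact_mod_cast mem_antidiagonal.1 hp
    rw [← hp']
    ring
  rw [hsplit, Finset.Nat.sum_antidiagonal_succ', Finset.Nat.sum_antidiagonal_succ]
  simp only [laguerre_eq_sum_antidiagonal, Finset.mul_sum]
  push_cast
  simp only [laguerreCoeff_succ_left, laguerreCoeff_succ_right, zero_mul, zero_add]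
  rw [← Finset.sum_add_distrib, ← Finset.sum_sub_distrib]
  refine Finset.sum_congr rfl fun p hp => ?_
  have hp' : (n : ℝ) = p.1 + p.2 := by exact_mod_cast (mem_antidiagonal.1 hp).symm
  rw [hp']
  ring

theorem laguerre_one : laguerre α 1 x = α + 1 - x := by
  have h := succ_mul_laguerre_succ α x 0
  simp only [laguerre_zero, Nat.cast_zero] at h
  linear_combination h

theorem succ_succ_mul_laguerre :
    (n + 2) * laguerre α (n + 2) x =
      (2 * n + 3 + α - x) * laguerre α (n + 1) x - (n + 1 + α) * laguerre α n x := by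
  have h := succ_mul_laguerre_succ α x (n + 1)
  push_cast at h
  linear_combination h - x * laguerre_add_one_succ α x n - succ_mul_laguerre_succ α x n

theorem succ_succ_mul_laguerre_eq_add_one_sub_add_two :
    (n + 2) * laguerre α (n + 2) x =
      (α + 1 - x) * laguerre (α + 1) (n + 1) x - x * laguerre (α + 2) n x := by
  have h := succ_mul_laguerre_succ α x (n + 1)
  have h' := succ_mul_laguerre_succ (α + 1) x n
  rw [add_assoc α, one_add_one_eq_two] at h'
  push_cast at h
  linear_combination h + h' - (n + 2 + α) * laguerre_add_one_succ α x n

theorem laguerre_pos_of_nonpos {α x : ℝ} (hα : -1 < α) (hx : x ≤ 0) : 0 < laguerre α n x := by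
  induction n generalizing α with
  | zero => simp [laguerre_zero]
  | succ n ih =>
    refine pos_of_mul_pos_right (a := (n : ℝ) + 1) ?_ (by positivity)
    rw [succ_mul_laguerre_succ]
    have h₁ : 0 < (n + 1 + α) * laguerre α n x :=
      mul_pos (by linarith [n.cast_nonneg (α := ℝ)]) (ih hα)
    have h₂ : x * laguerre (α + 1) n x ≤ 0 :=
      mul_nonpos_of_nonpos_of_nonneg hx (ih (by linarith)).le
    linarith

/-- `L_n^α` as a polynomial, for the notions of root and degree. -/
noncomputable def laguerrePoly : ℝ[X] :=
  ∑ p ∈ antidiagonal n, C (laguerreCoeff α p.1 p.2) * X ^ p.1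

theorem eval_laguerrePoly : (laguerrePoly α n).eval x = laguerre α n x := by
  simp only [laguerrePoly, eval_finsetSum, eval_C_mul, eval_pow, eval_X,
    laguerre_eq_sum_antidiagonal]

theorem derivative_laguerrePoly_succ :
    derivative (laguerrePoly α (n + 1)) = -laguerrePoly (α + 1) n := by
  rw [laguerrePoly, Finset.Nat.sum_antidiagonal_succ]
  simp only [derivative_add, derivative_sum, derivative_C_mul_X_pow, laguerrePoly]
  push_cast
  simp [mul_comm (laguerreCoeff _ _ _), laguerreCoeff_succ_left]

theorem degree_laguerrePoly : (laguerrePoly α n).degree = n := by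
  refine degree_eq_of_le_of_coeff_ne_zero ?_ ?_
  · refine (degree_sum_le _ _).trans (Finset.sup_le fun p hp => ?_)
    refine (degree_C_mul_X_pow_le _ _).trans ?_
    exact_mod_cast HasAntidiagonal.antidiagonal.fst_le hp
  · rw [laguerrePoly, Finset.Nat.sum_antidiagonal_eq_sum_range_succ_mk]
    simp only [finsetSum_coeff, coeff_C_mul_X_pow, Finset.sum_ite_eq]
    simp [laguerreCoeff, Nat.factorial_ne_zero]

theorem isFavardSequence_neg_one_pow_mul_laguerrePoly {α : ℝ} (hα : -1 < α) :
    IsFavardSequence fun n => C ((-1) ^ n) * laguerrePoly α n where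
  zero := Polynomial.funext fun x => by simp [eval_laguerrePoly, laguerre_zero]
  one := ⟨1, -(α + 1), one_pos, Polynomial.funext fun x => by
    simp only [pow_one, eval_add, eval_mul, eval_C, eval_X, eval_laguerrePoly, laguerre_one]
    ring⟩
  add_two n := by
    have hn : (0 : ℝ) < n + 2 := by positivity
    refine ⟨1 / (n + 2), -(2 * n + 3 + α) / (n + 2), (n + 1 + α) / (n + 2), by positivity,
      div_pos (by linarith [n.cast_nonneg (α := ℝ)]) hn, Polynomial.funext fun x => ?_⟩
    have h := succ_succ_mul_laguerre α x n
    simp only [eval_sub, eval_add, eval_mul, eval_C, eval_X, eval_laguerrePoly]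
    field_simp
    linear_combination (-1) ^ n * h

theorem splits_laguerrePoly {α : ℝ} (hα : -1 < α) : (laguerrePoly α n).Splits := by
  have h := (isFavardSequence_neg_one_pow_mul_laguerrePoly hα).splits n
  simpa [← mul_assoc, ← C_mul, ← mul_pow] using h.C_mul ((-1) ^ n)

end Laguerre

section Charlier

/-- The Charlier polynomial `∑ (-x)^k / k! · binom(y, n - k)` in the variable `y`, normalized so
that its value at `y = α + n` is `L_n^α(x)`. It turns a statement about the parameter `α` at fixed
`x > 0` into one about a Favard sequence. -/
noncomputable def charlier (x : ℝ) (n : ℕ) : ℝ[X] :=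
  ∑ p ∈ antidiagonal n,
    C ((-x) ^ p.1 / (p.1.factorial * p.2.factorial)) * descPochhammer ℝ p.2

theorem eval_charlier (x y : ℝ) (n : ℕ) : (charlier x n).eval y = laguerre (y - n) n x := by
  rw [charlier, laguerre_eq_sum_antidiagonal, eval_finsetSum]
  refine Finset.sum_congr rfl fun p hp => ?_
  have hp' : (n : ℝ) = p.1 + p.2 := by exact_mod_cast (mem_antidiagonal.1 hp).symm
  have hprod : ∏ i ∈ Finset.range p.2, (y - i) =
      ∏ i ∈ Finset.range p.2, (y - n + p.1 + 1 + i) := by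
    rw [← Finset.prod_range_reflect]
    refine Finset.prod_congr rfl fun i hi => ?_
    rw [Nat.cast_sub (by grind), Nat.cast_sub (by grind), hp']
    push_cast
    ring
  rw [eval_C_mul, descPochhammer_eval_eq_prod_range, hprod, laguerreCoeff, neg_pow x]
  ring

theorem isFavardSequence_charlier {x : ℝ} (hx : 0 < x) : IsFavardSequence (charlier x) where
  zero := by simp [charlier]
  one := ⟨1, -x, one_pos, Polynomial.funext fun y => by
    simp [eval_charlier, laguerre_one, sub_eq_add_neg]⟩
  add_two n := by
    refine ⟨1 / (n + 2), -(x + n + 1) / (n + 2), x / (n + 2), by positivity, by positivity,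
      Polynomial.funext fun y => ?_⟩
    have h := succ_succ_mul_laguerre_eq_add_one_sub_add_two (y - n - 2) x n
    simp only [eval_sub, eval_add, eval_mul, eval_C, eval_X, eval_charlier]
    push_cast
    rw [show y - n - 2 = y - (n + 2) by ring, show y - (n + 2) + 1 = y - (n + 1) by ring,
      show y - (n + 2) + 2 = y - n by ring] at h
    field_simp
    linear_combination h

theorem eval_charlier_succ_add_one (x y : ℝ) (n : ℕ) :
    (charlier x (n + 1)).eval (y + 1) = (charlier x (n + 1)).eval y + (charlier x n).eval y := by
  have h := laguerre_add_one_succ (y - n - 1) x n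
  simp only [eval_charlier, Nat.cast_add, Nat.cast_one]
  ring_nf at h ⊢
  exact h

theorem derivative_charlier_mul_eval_add_one_pos {x : ℝ} (hx : 0 < x) (n : ℕ) (z : ℝ)
    (hz : (charlier x n).IsRoot z) :
    0 < (charlier x n).derivative.eval z * (charlier x n).eval (z + 1) := by
  obtain _ | n := n
  · simp [charlier] at hz
  · rw [eval_charlier_succ_add_one, hz.eq_zero, zero_add]
    exact (isFavardSequence_charlier hx).derivative_eval_mul_eval_pos hz

end Charlier

section LaguerreSigns

variable {α x : ℝ} {n : ℕ}

theorem laguerre_mul_laguerre_pos_of_mem_Icc (hx : 0 < x)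
    (h : 0 < laguerre α n x * laguerre (α + 1) n x) {β γ : ℝ} (hβ : β ∈ Icc α (α + 1))
    (hγ : γ ∈ Icc α (α + 1)) : 0 < laguerre β n x * laguerre γ n x := by
  have hval : ∀ δ : ℝ, laguerre δ n x = (charlier x n).eval (δ + n) := fun δ => by
    rw [eval_charlier, add_sub_cancel_right]
  have hmem : ∀ δ ∈ Icc α (α + 1), δ + n ∈ Icc (α + n) (α + n + 1) := fun δ hδ =>
    ⟨by linarith [hδ.1], by linarith [hδ.2]⟩
  rw [hval, hval, add_right_comm] at h
  rw [hval, hval]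
  exact eval_mul_eval_pos_of_mem_Icc (derivative_charlier_mul_eval_add_one_pos hx n) h
    (hmem β hβ) (hmem γ hγ)

theorem laguerre_add_one_ne_zero_of_laguerre_succ_eq_zero (hx : 0 < x)
    (h : laguerre α (n + 1) x = 0) : laguerre (α + 1) n x ≠ 0 := by
  have hval : ∀ δ : ℝ, laguerre δ (n + 1) x = (charlier x (n + 1)).eval (δ + (n + 1)) := by
    intro δ
    rw [eval_charlier, Nat.cast_succ, add_sub_cancel_right]
  have hshift := laguerre_add_one_succ α x n
  rw [h, zero_add, hval, add_right_comm] at hshift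
  rw [← hshift]
  exact right_ne_zero_of_mul
    (derivative_charlier_mul_eval_add_one_pos hx (n + 1) _ ((hval α).symm.trans h)).ne'

theorem laguerre_add_one_mul_laguerre_add_pos (hα : -1 < α) {t : ℝ} (ht0 : 0 ≤ t) (ht2 : t ≤ 2)
    (h : laguerre α (n + 1) x = 0) : 0 < laguerre (α + 1) n x * laguerre (α + t) n x := by
  have hx : 0 < x := by
    by_contra! hx
    exact (laguerre_pos_of_nonpos (n + 1) hα hx).ne' h
  have hn : 0 < n + 1 + α := by linarith [n.cast_nonneg (α := ℝ)]
  have hsq : 0 < laguerre (α + 1) n x ^ 2 :=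
    sq_pos_of_ne_zero (laguerre_add_one_ne_zero_of_laguerre_succ_eq_zero hx h)
  have hvalue : (n + 1 + α) * laguerre α n x = x * laguerre (α + 1) n x := by
    linear_combination (n + 1) * h - succ_mul_laguerre_succ α x n
  have hvalue_two : x * laguerre (α + 1 + 1) n x = (α + 1) * laguerre (α + 1) n x := by
    linear_combination succ_mul_laguerre_succ (α + 1) x n
      - (n + 1) * laguerre_add_one_succ α x n - (n + 1) * h
  have hleft : 0 < laguerre α n x * laguerre (α + 1) n x := by
    refine pos_of_mul_pos_right (a := n + 1 + α) ?_ hn.le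
    rw [← mul_assoc, hvalue, mul_assoc, ← sq]
    exact mul_pos hx hsq
  have hright : 0 < laguerre (α + 1) n x * laguerre (α + 1 + 1) n x := by
    refine pos_of_mul_pos_right (a := x) ?_ hx.le
    rw [mul_left_comm, hvalue_two, mul_left_comm, ← sq]
    exact mul_pos (by linarith) hsq
  rcases le_total t 1 with ht | ht
  · exact laguerre_mul_laguerre_pos_of_mem_Icc hx hleft ⟨by linarith, le_rfl⟩
      ⟨by linarith, by linarith⟩
  · exact laguerre_mul_laguerre_pos_of_mem_Icc hx hright ⟨le_rfl, by linarith⟩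
      ⟨by linarith, by linarith⟩

theorem derivative_laguerrePoly_mul_laguerrePoly_neg (hα : -1 < α) {t : ℝ} (ht0 : 0 ≤ t)
    (ht2 : t ≤ 2) (h : (laguerrePoly α (n + 1)).IsRoot x) :
    (laguerrePoly α (n + 1)).derivative.eval x * (laguerrePoly (α + t) n).eval x < 0 := by
  rw [IsRoot.def, eval_laguerrePoly] at h
  rw [derivative_laguerrePoly_succ, eval_neg, eval_laguerrePoly, eval_laguerrePoly, neg_mul]
  exact neg_neg_of_pos (laguerre_add_one_mul_laguerre_add_pos hα ht0 ht2 h)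

end LaguerreSigns

end

theorem S_sign_change_at_zeros_of_L_n (α t b : ℝ) (hα : α > -1) (ht0 : 0 < t)
    (ht2 : t ≤ 2) (hb : b ≠ 0) (n : ℕ) (hn : 2 ≤ n)
    (S : ℝ → ℝ) (hS : ∀ x, S x = laguerre α n x + b * laguerre (α + t) (n - 1) x)
    (x x' : ℝ) (hlt : x < x') (hx : laguerre α n x = 0) (hx' : laguerre α n x' = 0)
    (hcons : ∀ u ∈ Set.Ioo x x', laguerre α n u ≠ 0) :
    S x * S x' < 0 ∧ ∃! z, z ∈ Set.Ioo x x' ∧ S z = 0 := by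
  obtain ⟨m, rfl⟩ : ∃ m, n = m + 1 := ⟨n - 1, by omega⟩
  have hSpoly : ∀ u, S u =
      (laguerrePoly α (m + 1) + Polynomial.C b * laguerrePoly (α + t) m).eval u := fun u => by
    rw [hS, Polynomial.eval_add, Polynomial.eval_C_mul, eval_laguerrePoly, eval_laguerrePoly,
      Nat.add_sub_cancel]
  have hdeg : (laguerrePoly (α + t) m).degree < (laguerrePoly α (m + 1)).degree := by
    rw [degree_laguerrePoly, degree_laguerrePoly]
    exact_mod_cast m.lt_succ_self
  simp only [← eval_laguerrePoly] at hx hx' hcons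
  simp only [hSpoly]
  exact eval_add_mul_neg_and_existsUnique_root (splits_laguerrePoly _ hα) hdeg
    (fun _ hz => derivative_laguerrePoly_mul_laguerrePoly_neg hα ht0.le ht2 hz) hb hlt hx hx' hcons
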